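/- arXiv:2511.01782 — 2 statements merged into one kernel-verified Lean document; each statement's English description precedes it below -/
import Mathlib

section
/- Let G be a finite abelian group and let χ be a generalized character of G whose values on all nonidentity elements are sums of at most two roots of unity. Suppose χ = a·ρ_G + ε·(λ₁ + λ₂ + λ₃ − λ₄) for some integer a, sign ε ∈ {1, −1}, and pairwise distinct irreducible characters λ₁, λ₂, λ₃, λ₄ of G. Then for every nonidentity x ∈ G there exists a root of unity μ such that χ(x) = 2μ. -/
/-!
The theorem is a second moment computation. Put `f = λ₁ + λ₂ + λ₃ - λ₄`, so that `χ = ± f` off the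
identity. Orthogonality of characters gives `∑ g, ‖f g‖ ^ 2 = 4 * |G|`, and `f 1 = 2`; hence
`‖χ x‖ ^ 2 = ‖f x‖ ^ 2` has mean exactly `4` over the nonidentity elements. A sum of at most two
roots of unity has norm at most `2`, so equality `‖χ x‖ = 2` holds at every `x ≠ 1`. By strict
convexity (the parallelogram law), a sum `u + v` of two roots of unity of norm `2` has `u = v`.
-/

def IsRootOfUnity (z : ℂ) : Prop := ∃ n : ℕ, 0 < n ∧ z ^ n = 1

def IsSumAtMostTwoRootsOfUnity (z : ℂ) : Prop :=
  z = 0 ∨ IsRootOfUnity z ∨ ∃ u v : ℂ, IsRootOfUnity u ∧ IsRootOfUnity v ∧ z = u + v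

lemma IsRootOfUnity.norm_eq_one {z : ℂ} (h : IsRootOfUnity z) : ‖z‖ = 1 := by
  obtain ⟨n, hn, hz⟩ := h
  exact Complex.norm_eq_one_of_pow_eq_one hz hn.ne'

lemma IsSumAtMostTwoRootsOfUnity.norm_le_two {z : ℂ} (h : IsSumAtMostTwoRootsOfUnity z) :
    ‖z‖ ≤ 2 := by
  rcases h with rfl | h | ⟨u, v, hu, hv, rfl⟩
  · simp
  · rw [h.norm_eq_one]; norm_num
  · have := norm_add_le u v
    rw [hu.norm_eq_one, hv.norm_eq_one] at this
    linarith

/-- The equality case of `IsSumAtMostTwoRootsOfUnity.norm_le_two`. -/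
lemma IsSumAtMostTwoRootsOfUnity.eq_two_mul {z : ℂ} (h : IsSumAtMostTwoRootsOfUnity z)
    (hz : ‖z‖ = 2) : ∃ μ : ℂ, IsRootOfUnity μ ∧ z = 2 * μ := by
  rcases h with rfl | h | ⟨u, v, hu, hv, rfl⟩
  · simp at hz
  · rw [h.norm_eq_one] at hz; norm_num at hz
  · have hp := parallelogram_law_with_norm ℝ u v
    rw [hu.norm_eq_one, hv.norm_eq_one, hz] at hp
    have huv : ‖u - v‖ = 0 := by nlinarith [norm_nonneg (u - v)]
    have : u = v := sub_eq_zero.mp (norm_eq_zero.mp huv)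
    exact ⟨u, hu, by rw [← this]; ring⟩

section Orthogonality

variable {G : Type*} [CommGroup G] [Fintype G]

lemma conj_character (l : G →* ℂˣ) (g : G) :
    (starRingEnd ℂ) (l g : ℂ) = ((l g)⁻¹ : ℂˣ) := by
  have hn : ‖(l g : ℂ)‖ = 1 := by
    refine Complex.norm_eq_one_of_pow_eq_one (n := Fintype.card G) ?_ Fintype.card_ne_zero
    rw [← Units.val_pow_eq_pow_val, ← map_pow, pow_card_eq_one, map_one, Units.val_one]
  rw [Units.val_inv_eq_inv_val, Complex.inv_eq_conj hn]

lemma sum_character_mul_conj_self (l : G →* ℂˣ) :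
    ∑ g, (l g : ℂ) * (starRingEnd ℂ) (l g : ℂ) = Fintype.card G := by
  simp [conj_character]

lemma sum_character_mul_conj_of_ne {l m : G →* ℂˣ} (h : l ≠ m) :
    ∑ g, (l g : ℂ) * (starRingEnd ℂ) (m g : ℂ) = 0 := by
  have hne : (Units.coeHom ℂ).comp (l * m⁻¹) ≠ 1 := by
    intro H
    apply h
    rw [← mul_inv_eq_one]
    ext g
    simpa using DFunLike.congr_fun H g
  rw [← sum_hom_units_eq_zero _ hne]
  exact Finset.sum_congr rfl fun g _ => by rw [conj_character]; simp

/-- The second moment of `l₁ + l₂ + l₃ - l₄` for pairwise distinct characters. -/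
lemma sum_norm_sq (l₁ l₂ l₃ l₄ : G →* ℂˣ)
    (h12 : l₁ ≠ l₂) (h13 : l₁ ≠ l₃) (h14 : l₁ ≠ l₄)
    (h23 : l₂ ≠ l₃) (h24 : l₂ ≠ l₄) (h34 : l₃ ≠ l₄) :
    ∑ g, ‖(l₁ g : ℂ) + l₂ g + l₃ g - l₄ g‖ ^ 2 = 4 * (Fintype.card G : ℝ) := by
  apply Complex.ofReal_injective
  push_cast
  simp only [← Complex.mul_conj', map_add, map_sub, add_mul, sub_mul, mul_add, mul_sub,
    Finset.sum_add_distrib, Finset.sum_sub_distrib, sum_character_mul_conj_self,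
    sum_character_mul_conj_of_ne h12, sum_character_mul_conj_of_ne h12.symm,
    sum_character_mul_conj_of_ne h13, sum_character_mul_conj_of_ne h13.symm,
    sum_character_mul_conj_of_ne h14, sum_character_mul_conj_of_ne h14.symm,
    sum_character_mul_conj_of_ne h23, sum_character_mul_conj_of_ne h23.symm,
    sum_character_mul_conj_of_ne h24, sum_character_mul_conj_of_ne h24.symm,
    sum_character_mul_conj_of_ne h34, sum_character_mul_conj_of_ne h34.symm]
  ring

end Orthogonality

theorem stmt_10 {G : Type*} [CommGroup G] [Fintype G] [DecidableEq G]
    (χ : G → ℂ)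
    -- values on nonidentity elements are sums of at most two roots of unity
    (hval : ∀ x : G, x ≠ 1 → IsSumAtMostTwoRootsOfUnity (χ x))
    (a ε : ℤ) (hε : ε = 1 ∨ ε = -1)
    (lam₁ lam₂ lam₃ lam₄ : G →* ℂˣ)
    (h12 : lam₁ ≠ lam₂) (h13 : lam₁ ≠ lam₃) (h14 : lam₁ ≠ lam₄)
    (h23 : lam₂ ≠ lam₃) (h24 : lam₂ ≠ lam₄) (h34 : lam₃ ≠ lam₄)
    -- χ = a·ρ_G + ε·(λ₁ + λ₂ + λ₃ − λ₄)
    (hform : ∀ g : G, χ g = (a : ℂ) * (if g = 1 then (Fintype.card G : ℂ) else 0)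
        + (ε : ℂ) * ((lam₁ g : ℂ) + (lam₂ g : ℂ) + (lam₃ g : ℂ) - (lam₄ g : ℂ))) :
    ∀ x : G, x ≠ 1 → ∃ μ : ℂ, IsRootOfUnity μ ∧ χ x = 2 * μ := by
  have hnorm : ∀ x : G, x ≠ 1 →
      ‖χ x‖ = ‖(lam₁ x : ℂ) + lam₂ x + lam₃ x - lam₄ x‖ := by
    intro x hx
    rw [hform x, if_neg hx]
    rcases hε with rfl | rfl
    · simp
    · rw [← norm_neg]; congr 1; push_cast; ring
  have hle : ∀ x : G, ‖(lam₁ x : ℂ) + lam₂ x + lam₃ x - lam₄ x‖ ^ 2 ≤ 4 := by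
    intro x
    by_cases hx : x = 1
    · subst hx; norm_num
    · rw [← hnorm x hx]
      nlinarith [(hval x hx).norm_le_two, norm_nonneg (χ x)]
  -- The value at the identity is `2`, so the bound `4` holds on all of `G` and equals the mean.
  have hsum : ∑ g : G, ‖(lam₁ g : ℂ) + lam₂ g + lam₃ g - lam₄ g‖ ^ 2 = ∑ _g : G, (4 : ℝ) := by
    rw [sum_norm_sq lam₁ lam₂ lam₃ lam₄ h12 h13 h14 h23 h24 h34]
    simp [mul_comm]
  have heq := (Finset.sum_eq_sum_iff_of_le fun g _ => hle g).mp hsum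
  intro x hx
  refine (hval x hx).eq_two_mul ?_
  have h4 := heq x (Finset.mem_univ x)
  rw [← hnorm x hx] at h4
  nlinarith [norm_nonneg (χ x)]
end

section
/- Let G be a finite group and let χ be a generalized character of G, with (integer) virtual degree d = χ(1), such that χ(x) is a sum of at most two roots of unity for every nonidentity x ∈ G. Then for every prime p dividing |G| there exists an integer a ∈ {−2, −1, 0, 1, 2} such that d ≡ a (mod p). -/
/-- A generalized character of a finite group: the difference of the characters of two
finite-dimensional complex representations. -/
def IsGenChar (G : Type) [Group G] (χ : G → ℂ) : Prop :=
  ∃ V W : FDRep ℂ G, ∀ g : G, χ g = V.character g - W.character g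

open Polynomial

/-- A sum of `p`-th roots of unity is an integer polynomial in `ζ` whose value at `1` counts the
summands. -/
theorem exists_intPoly_of_pow_eq_one {ζ : ℂ} {p : ℕ} (hp : 0 < p) (hζ : IsPrimitiveRoot ζ p)
    (s : Multiset ℂ) (hs : ∀ z ∈ s, z ^ p = 1) :
    ∃ f : ℤ[X], s.sum = aeval ζ f ∧ f.eval 1 = s.card := by
  induction s using Multiset.induction_on with
  | empty => exact ⟨0, by simp, by simp⟩
  | cons z s ih =>
    obtain ⟨f, hf, hf1⟩ := ih fun y hy => hs y (Multiset.mem_cons_of_mem hy)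
    have : NeZero p := ⟨hp.ne'⟩
    obtain ⟨i, -, hi⟩ := hζ.eq_pow_of_pow_eq_one (hs z (Multiset.mem_cons_self z s))
    exact ⟨X ^ i + f, by simp [hf, hi], by simp [hf1, add_comm]⟩

/-- The eigenvalues of `x` on `V` are `p`-th roots of unity, so the character value at `x` is an
integer polynomial in `ζ`, and replacing `ζ` by `1` gives the degree. -/
theorem character_eq_intPoly {G : Type} [Group G] {ζ : ℂ} {p : ℕ} (hp : 0 < p)
    (hζ : IsPrimitiveRoot ζ p) (V : FDRep ℂ G) {x : G} (hx : x ^ p = 1) :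
    ∃ f : ℤ[X], V.character x = aeval ζ f ∧ V.character 1 = ((f.eval 1 : ℤ) : ℂ) := by
  have hsplit : (LinearMap.charpoly (V.ρ x)).Splits := IsAlgClosed.splits _
  obtain ⟨f, hf, hf1⟩ := exists_intPoly_of_pow_eq_one hp hζ (LinearMap.charpoly (V.ρ x)).roots (by
    intro z hz
    have hz' : Module.End.HasEigenvalue (V.ρ x) z :=
      (Module.End.hasEigenvalue_iff_isRoot_charpoly _ _).2 (isRoot_of_mem_roots hz)
    obtain ⟨v, hv⟩ := hz'.exists_hasEigenvector
    have h1 := hv.pow_apply p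
    rw [← map_pow, hx, map_one, Module.End.one_apply] at h1
    have h2 : (z ^ p - 1) • v = 0 := by rw [sub_smul, ← h1, one_smul, sub_self]
    rcases smul_eq_zero.1 h2 with h | h
    · exact sub_eq_zero.1 h
    · exact absurd h hv.2)
  refine ⟨f, ?_, ?_⟩
  · rw [← hf, FDRep.character, Module.End.trace_eq_sum_roots_charpoly_of_splits hsplit]
  · rw [hf1, FDRep.char_one, ← hsplit.natDegree_eq_card_roots, LinearMap.charpoly_natDegree]
    simp

theorem dvd_of_totient_le_two {M : ℕ} (hM : 0 < M) (h : M.totient ≤ 2) : M ∣ 4 ∨ M ∣ 6 := by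
  have key : ∀ k, k ∣ M → k.totient ≤ 2 := fun k hk =>
    (Nat.le_of_dvd (Nat.totient_pos.2 hM) (Nat.totient_dvd_of_dvd hk)).trans h
  have h8 : ¬ 8 ∣ M := fun hk => absurd (key 8 hk) (by decide)
  have h9 : ¬ 9 ∣ M := fun hk => absurd (key 9 hk) (by decide)
  have h12 : ¬ 12 ∣ M := fun hk => absurd (key 12 hk) (by decide)
  have hq : ∀ q, q.Prime → q ∣ M → q ≤ 3 := fun q hq hk => by
    have := key q hk
    rw [Nat.totient_prime hq] at this
    omega
  obtain ⟨a, m, hm2, rfl⟩ := Nat.exists_eq_pow_mul_and_not_dvd hM.ne' 2 (by norm_num)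
  have hm0 : m ≠ 0 := by rintro rfl; simp at hm2
  obtain ⟨b, r, hr3, rfl⟩ := Nat.exists_eq_pow_mul_and_not_dvd hm0 3 (by norm_num)
  have hr : r = 1 := by
    by_contra hr1
    obtain ⟨q, hqp, hqr⟩ := Nat.exists_prime_and_dvd hr1
    have h3 := hq q hqp ((hqr.mul_left _).mul_left _)
    have h2 := hqp.two_le
    interval_cases q
    · exact hm2 (hqr.mul_left _)
    · exact hr3 hqr
  subst hr
  have ha : a < 3 := by
    by_contra hc
    exact h8 ((pow_dvd_pow 2 (not_lt.1 hc)).mul_right _)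
  have hb : b < 2 := by
    by_contra hc
    exact h9 (((pow_dvd_pow 3 (not_lt.1 hc)).mul_right _).mul_left _)
  interval_cases a <;> interval_cases b <;> first | (exfalso; apply h12; norm_num; done) | (norm_num)

theorem isCyclotomicExtension_adjoin {ζ : ℂ} {p : ℕ} (hp : 0 < p) (hζ : IsPrimitiveRoot ζ p) :
    IsCyclotomicExtension {p} ℚ (IntermediateField.adjoin ℚ {ζ}) :=
  have : NeZero p := ⟨hp.ne'⟩
  (IntermediateField.isCyclotomicExtension_singleton_iff_eq_adjoin p ℚ ℂ _ hζ).2 rfl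

/-- A root of unity `u` of degree at most two over `ℚ(ζ)` has order dividing `4p` or `6p`: with
`N = lcm(p, ord u)` the field `ℚ(ζ, u)` contains a primitive `N`-th root of unity, hence
`φ(N) ≤ 2(p - 1)`. -/
theorem pow_eq_one_of_quadratic {ζ : ℂ} {p : ℕ} (hp : p.Prime) (hp3 : 3 ≤ p)
    (hζ : IsPrimitiveRoot ζ p) {u α w : ℂ} (hu : IsOfFinOrder u)
    (hα : α ∈ IntermediateField.adjoin ℚ {ζ}) (hw : w ∈ IntermediateField.adjoin ℚ {ζ})
    (h : u ^ 2 - α * u + w = 0) : u ^ (p * 4) = 1 ∨ u ^ (p * 6) = 1 := by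
  have : NeZero p := ⟨hp.ne_zero⟩
  set K := IntermediateField.adjoin ℚ {ζ} with hK
  have : IsCyclotomicExtension {p} ℚ K := isCyclotomicExtension_adjoin hp.pos hζ
  have hKdim : Module.finrank ℚ K = p - 1 := by
    rw [IsCyclotomicExtension.Rat.finrank p K, Nat.totient_prime hp]
  have : FiniteDimensional ℚ K := IsCyclotomicExtension.finiteDimensional {p} ℚ K
  let q : K[X] := X ^ 2 + (C (-(⟨α, hα⟩ : K)) * X + C (⟨w, hw⟩ : K))
  have hqlt : (C (-(⟨α, hα⟩ : K)) * X + C (⟨w, hw⟩ : K)).degree < ((2 : ℕ) : WithBot ℕ) :=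
    lt_of_le_of_lt degree_linear_le (by norm_num)
  have hqm : q.Monic := monic_X_pow_add hqlt
  have hqd : q.natDegree = 2 := by
    refine natDegree_eq_of_degree_eq_some ?_
    rw [degree_add_eq_left_of_degree_lt (by rwa [degree_X_pow]), degree_X_pow]
  have hq0 : aeval u q = 0 := by
    have : aeval u q = u ^ 2 + (-α * u + w) := by
      simp [q, IntermediateField.algebraMap_apply]
    rw [this, ← h]; ring
  have hint : IsIntegral K u := ⟨q, hqm, hq0⟩
  let L := IntermediateField.adjoin K {u}
  have : FiniteDimensional K L := IntermediateField.adjoin.finiteDimensional hint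
  have hLdim : Module.finrank K L ≤ 2 := by
    rw [IntermediateField.adjoin.finrank hint, ← hqd]
    exact natDegree_le_of_dvd (minpoly.dvd _ _ hq0) hqm.ne_zero
  have : FiniteDimensional ℚ L := FiniteDimensional.trans ℚ K L
  have hdim : Module.finrank ℚ L ≤ (p - 1) * 2 := by
    rw [← Module.finrank_mul_finrank ℚ K L, hKdim]
    exact Nat.mul_le_mul_left _ hLdim
  let uL : L := ⟨u, IntermediateField.mem_adjoin_simple_self K u⟩
  let zL : L := algebraMap K L ⟨ζ, IntermediateField.mem_adjoin_simple_self ℚ ζ⟩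
  have hz : IsPrimitiveRoot zL p :=
    IsPrimitiveRoot.of_map_of_injective (f := algebraMap L ℂ) hζ (algebraMap L ℂ).injective
  have huo : IsPrimitiveRoot uL (orderOf u) :=
    IsPrimitiveRoot.of_map_of_injective (f := algebraMap L ℂ) (IsPrimitiveRoot.orderOf u)
      (algebraMap L ℂ).injective
  have hprim := hz.pow_mul_pow_lcm huo hp.ne_zero hu.orderOf_pos.ne'
  set N := p.lcm (orderOf u) with hN
  have hNpos : 0 < N := Nat.lcm_pos hp.pos hu.orderOf_pos
  have hphi : N.totient ≤ (p - 1) * 2 := by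
    rw [← natDegree_cyclotomic N ℚ, cyclotomic_eq_minpoly_rat hprim hNpos]
    exact (minpoly.natDegree_le _).trans hdim
  obtain ⟨M, hM⟩ : p ∣ N := Nat.dvd_lcm_left _ _
  have huN : orderOf u ∣ p * M := hM ▸ Nat.dvd_lcm_right _ _
  have hM0 : 0 < M := Nat.pos_of_ne_zero (by rintro rfl; simp [hM] at hNpos)
  have hM2 : M.totient ≤ 2 := by
    rw [hM] at hphi
    have hp1 : 0 < p - 1 := by omega
    by_cases hpM : p ∣ M
    · -- `p ∣ M` would force `p * (p - 1) ≤ φ(N)`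
      rw [Nat.totient_mul_of_prime_of_dvd hp hpM] at hphi
      have h1 : p - 1 ≤ M.totient := by
        have := Nat.le_of_dvd (Nat.totient_pos.2 hM0) (Nat.totient_dvd_of_dvd hpM)
        rwa [Nat.totient_prime hp] at this
      exfalso
      have h2 : 3 * (p - 1) ≤ p * M.totient := Nat.mul_le_mul hp3 h1
      omega
    · rw [Nat.totient_mul_of_prime_of_not_dvd hp hpM] at hphi
      exact Nat.le_of_mul_le_mul_left hphi hp1
  rcases dvd_of_totient_le_two hM0 hM2 with h4 | h6
  · exact Or.inl (orderOf_dvd_iff_pow_eq_one.1 (huN.trans (Nat.mul_dvd_mul_left p h4)))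
  · exact Or.inr (orderOf_dvd_iff_pow_eq_one.1 (huN.trans (Nat.mul_dvd_mul_left p h6)))

theorem eq_neg_pow_of_mem_adjoin {ζ : ℂ} {p : ℕ} (hp : p.Prime) (hp3 : 3 ≤ p)
    (hζ : IsPrimitiveRoot ζ p) {w : ℂ} (hw : IsOfFinOrder w)
    (hwK : w ∈ IntermediateField.adjoin ℚ {ζ}) : ∃ r : ℕ, w = (-ζ) ^ r := by
  have : NeZero p := ⟨hp.ne_zero⟩
  have : IsCyclotomicExtension {p} ℚ (IntermediateField.adjoin ℚ {ζ}) :=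
    isCyclotomicExtension_adjoin hp.pos hζ
  have : NumberField (IntermediateField.adjoin ℚ {ζ}) :=
    IsCyclotomicExtension.numberField {p} ℚ _
  let K := IntermediateField.adjoin ℚ {ζ}
  let zK : K := ⟨ζ, IntermediateField.mem_adjoin_simple_self ℚ ζ⟩
  have hz : IsPrimitiveRoot zK p :=
    IsPrimitiveRoot.of_map_of_injective (f := algebraMap K ℂ) hζ (algebraMap K ℂ).injective
  have hwo : IsOfFinOrder (⟨w, hwK⟩ : K) := by
    obtain ⟨n, hn, h⟩ := isOfFinOrder_iff_pow_eq_one.1 hw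
    exact isOfFinOrder_iff_pow_eq_one.2 ⟨n, hn, Subtype.ext h⟩
  obtain ⟨r, hr⟩ := hz.exists_neg_pow_of_isOfFinOrder (hp.odd_of_ne_two (by omega)) hwo
  exact ⟨r, congrArg (algebraMap K ℂ) hr⟩

/-- Reduction of the algebraic integers modulo a maximal ideal above `p`. -/
theorem exists_reduction {p : ℕ} (hp : p.Prime) :
    ∃ (k : Type) (_ : Field k) (_ : CharP k p), Nonempty (integralClosure ℤ ℂ →+* k) := by
  have : (Ideal.span {(p : ℤ)}).IsMaximal :=
    PrincipalIdealRing.isMaximal_of_irreducible (Nat.prime_iff_prime_int.1 hp).irreducible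
  obtain ⟨Q, hQ, hQp⟩ := Ideal.exists_ideal_over_maximal_of_isIntegral
    (S := integralClosure ℤ ℂ) (Ideal.span {(p : ℤ)}) (by
      rw [(RingHom.injective_iff_ker_eq_bot _).1
        (FaithfulSMul.algebraMap_injective ℤ (integralClosure ℤ ℂ))]
      exact bot_le)
  let _ : Field (integralClosure ℤ ℂ ⧸ Q) := Ideal.Quotient.field Q
  have hpQ : (p : integralClosure ℤ ℂ) ∈ Q := by
    have : (p : ℤ) ∈ Q.comap (algebraMap ℤ (integralClosure ℤ ℂ)) := by
      rw [hQp]; exact Ideal.mem_span_singleton_self _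
    simpa using this
  have h0 : (p : integralClosure ℤ ℂ ⧸ Q) = 0 := by
    have := Ideal.Quotient.eq_zero_iff_mem.2 hpQ
    simpa using this
  exact ⟨_, inferInstance, (CharP.charP_iff_prime_eq_zero hp).2 h0, ⟨Ideal.Quotient.mk Q⟩⟩

theorem eq_one_of_pow_prime_eq_one {k : Type} [Field k] {p : ℕ} (hp : p.Prime) [CharP k p]
    {z : k} (h : z ^ p = 1) : z = 1 := by
  have : Fact p.Prime := ⟨hp⟩
  have : (z - 1) ^ p = 0 := by rw [sub_pow_char, h, one_pow, sub_self]
  exact sub_eq_zero.1 (pow_eq_zero_iff hp.ne_zero |>.1 this)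

/-- For `t = a + a⁻¹`, the product `t (t² - 4)` vanishes when `a⁴ = 1`, and
`(t² - 4)(t² - 1)` vanishes when `a⁶ = 1`. -/
theorem add_mem_of_pow_eq_one {k : Type} [Field k] {a b : k} (hab : a * b = 1)
    (ha : a ^ 4 = 1 ∨ a ^ 6 = 1) :
    ∃ n : ℤ, n ∈ ({-2, -1, 0, 1, 2} : Set ℤ) ∧ a + b = n := by
  have ha0 : a ≠ 0 := left_ne_zero_of_mul_eq_one hab
  have key : (a + b - 2) * (a + b + 2) * (a + b) = 0 ∨
      (a + b - 2) * (a + b + 2) * ((a + b + 1) * (a + b - 1)) = 0 := by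
    have hb : b = a⁻¹ := (inv_eq_of_mul_eq_one_right hab).symm
    subst hb
    rcases ha with h | h
    · left; field_simp
      linear_combination (a ^ 2 - 1) * h
    · right; field_simp
      linear_combination (a ^ 2 - 1) * h
  have fin : a + b = 2 ∨ a + b = -2 ∨ a + b = 0 ∨ a + b = -1 ∨ a + b = 1 := by
    simp only [mul_eq_zero, sub_eq_zero, add_eq_zero_iff_eq_neg (b := (1 : k)),
      add_eq_zero_iff_eq_neg (b := (2 : k))] at key
    tauto
  rcases fin with h | h | h | h | h
  · exact ⟨2, by simp, by simp [h]⟩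
  · exact ⟨-2, by simp, by simp [h]⟩
  · exact ⟨0, by simp, by simp [h]⟩
  · exact ⟨-1, by simp, by simp [h]⟩
  · exact ⟨1, by simp, by simp [h]⟩

theorem isOfFinOrder_of_isRootOfUnity {z : ℂ} (h : IsRootOfUnity z) : IsOfFinOrder z :=
  isOfFinOrder_iff_pow_eq_one.2 h

theorem isIntegral_of_isRootOfUnity {z : ℂ} (h : IsRootOfUnity z) : IsIntegral ℤ z := by
  obtain ⟨n, hn, h⟩ := h
  exact IsIntegral.of_pow hn (h ▸ isIntegral_one)

theorem conj_mul_of_isRootOfUnity {z : ℂ} (h : IsRootOfUnity z) :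
    z * starRingEnd ℂ z = 1 := by
  obtain ⟨n, hn, h⟩ := h
  rw [Complex.mul_conj, Complex.normSq_eq_norm_sq, Complex.norm_eq_one_of_pow_eq_one h hn.ne']
  simp

theorem aeval_mem_adjoin (ζ : ℂ) (f : ℤ[X]) (i : ℕ) :
    aeval (ζ ^ i) f ∈ IntermediateField.adjoin ℚ {ζ} := by
  have : aeval (ζ ^ i) f = aeval ζ ((f.comp (X ^ i)).map (Int.castRingHom ℚ)) := by
    rw [← algebraMap_int_eq, aeval_map_algebraMap, aeval_comp]; simp
  rw [this]
  exact IntermediateField.algebra_adjoin_le_adjoin ℚ {ζ} (aeval_mem_adjoin_singleton ℚ ζ)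

/-- The arithmetic core: `f(ζ)` is a sum of at most two roots of unity, and `f(1)` is its reduction
modulo a maximal ideal above `p`. -/
theorem exists_congr_of_sum {p : ℕ} (hp : p.Prime) (hp3 : 3 ≤ p) {ζ : ℂ}
    (hζ : IsPrimitiveRoot ζ p) (f : ℤ[X]) (h : IsSumAtMostTwoRootsOfUnity (aeval ζ f)) :
    ∃ a : ℤ, a ∈ ({-2, -1, 0, 1, 2} : Set ℤ) ∧ (p : ℤ) ∣ f.eval 1 - a := by
  obtain ⟨k, _, _, ⟨φ⟩⟩ := exists_reduction hp
  suffices hk : ∃ a : ℤ, a ∈ ({-2, -1, 0, 1, 2} : Set ℤ) ∧ ((f.eval 1 : ℤ) : k) = a by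
    obtain ⟨a, ha, hk⟩ := hk
    refine ⟨a, ha, (CharP.intCast_eq_zero_iff k p _).1 ?_⟩
    rw [Int.cast_sub, hk, sub_self]
  have hζr : IsRootOfUnity ζ := ⟨p, hp.pos, hζ.pow_eq_one⟩
  obtain ⟨z, rfl⟩ : ∃ z : integralClosure ℤ ℂ, (z : ℂ) = ζ :=
    ⟨⟨ζ, isIntegral_of_isRootOfUnity hζr⟩, rfl⟩
  have hφz : φ z = 1 := by
    refine eq_one_of_pow_prime_eq_one hp ?_
    rw [← map_pow, show z ^ p = 1 from Subtype.ext hζ.pow_eq_one, map_one]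
  have hred : ∀ i : ℕ, φ (aeval (z ^ i) f) = ((f.eval 1 : ℤ) : k) := by
    intro i
    have h1 := Polynomial.hom_eval₂ f (algebraMap ℤ (integralClosure ℤ ℂ)) φ (z ^ i)
    rw [aeval_def, h1, map_pow, hφz, one_pow,
      RingHom.ext_int (φ.comp (algebraMap ℤ (integralClosure ℤ ℂ))) (Int.castRingHom k)]
    simp
  have hcoe : ∀ i : ℕ, ((aeval (z ^ i) f : integralClosure ℤ ℂ) : ℂ) = aeval ((z : ℂ) ^ i) f := by
    intro i
    have := aeval_algebraMap_apply ℂ (z ^ i) f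
    simpa using this.symm
  have hα1 : aeval (z : ℂ) f = aeval ((z : ℂ) ^ 1) f := by rw [pow_one]
  rcases h with h | h | ⟨u, v, hu, hv, huv⟩
  · refine ⟨0, by simp, ?_⟩
    rw [← hred 1, show aeval (z ^ 1) f = 0 from Subtype.ext (by rw [hcoe, ← hα1, h]; rfl)]
    simp
  · obtain ⟨r, hr⟩ := eq_neg_pow_of_mem_adjoin hp hp3 hζ (isOfFinOrder_of_isRootOfUnity h)
      (hα1 ▸ aeval_mem_adjoin (z : ℂ) f 1)
    have hk : ((f.eval 1 : ℤ) : k) = (-1) ^ r := by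
      rw [← hred 1, show aeval (z ^ 1) f = (-z) ^ r from Subtype.ext (by rw [hcoe, ← hα1, hr]; simp),
        map_pow, map_neg, hφz]
    rcases neg_one_pow_eq_or k r with h1 | h1
    · exact ⟨1, by simp, by rw [hk, h1]; simp⟩
    · exact ⟨-1, by simp, by rw [hk, h1]; simp⟩
  · by_cases hd0 : ((f.eval 1 : ℤ) : k) = 0
    · exact ⟨0, by simp, by simpa using hd0⟩
    have hconjz : starRingEnd ℂ (z : ℂ) = (z : ℂ) ^ (p - 1) := by
      have h1 := conj_mul_of_isRootOfUnity hζr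
      have h2 : (z : ℂ) * (z : ℂ) ^ (p - 1) = 1 := by
        rw [← pow_succ', Nat.sub_add_cancel hp.one_le, hζ.pow_eq_one]
      exact mul_left_cancel₀ (left_ne_zero_of_mul_eq_one h1) (h1.trans h2.symm)
    have hconj : starRingEnd ℂ (aeval (z : ℂ) f) = aeval ((z : ℂ) ^ (p - 1)) f := by
      rw [← hconjz, aeval_def, aeval_def, Polynomial.hom_eval₂]
      congr 1
      exact RingHom.ext_int _ _
    -- a root of unity has conjugate equal to its inverse, so `u + v = u v * conj (u + v)`
    have hmul : aeval (z : ℂ) f = u * v * aeval ((z : ℂ) ^ (p - 1)) f := by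
      rw [← hconj, huv, map_add]
      linear_combination (-v) * conj_mul_of_isRootOfUnity hu - u * conj_mul_of_isRootOfUnity hv
    have hne : aeval ((z : ℂ) ^ (p - 1)) f ≠ 0 := by
      intro h0
      apply hd0
      rw [← hred (p - 1), show aeval (z ^ (p - 1)) f = 0 from Subtype.ext (by rw [hcoe, h0]; rfl),
        map_zero]
    have hαK : aeval (z : ℂ) f ∈ IntermediateField.adjoin ℚ {(z : ℂ)} :=
      hα1 ▸ aeval_mem_adjoin (z : ℂ) f 1
    have hwK : u * v ∈ IntermediateField.adjoin ℚ {(z : ℂ)} := by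
      rw [← (div_eq_iff hne).2 hmul]
      exact div_mem hαK (aeval_mem_adjoin (z : ℂ) f _)
    have hquad := pow_eq_one_of_quadratic hp hp3 hζ (isOfFinOrder_of_isRootOfUnity hu) hαK hwK
      (by rw [huv]; ring)
    obtain ⟨uR, rfl⟩ : ∃ y : integralClosure ℤ ℂ, (y : ℂ) = u :=
      ⟨⟨u, isIntegral_of_isRootOfUnity hu⟩, rfl⟩
    obtain ⟨vR, rfl⟩ : ∃ y : integralClosure ℤ ℂ, (y : ℂ) = v :=
      ⟨⟨v, isIntegral_of_isRootOfUnity hv⟩, rfl⟩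
    have hsum : ((f.eval 1 : ℤ) : k) = φ uR + φ vR := by
      rw [← hred 1, ← map_add]
      congr 1
      exact Subtype.ext (by rw [hcoe, ← hα1, huv]; rfl)
    -- `f(ζ)` and its conjugate have the same nonzero reduction, so `u v` reduces to `1`
    have hprod : φ uR * φ vR = 1 := by
      have h1 : aeval (z ^ 1) f = uR * vR * aeval (z ^ (p - 1)) f :=
        Subtype.ext (by rw [hcoe, ← hα1, hmul, ← hcoe]; rfl)
      have h2 := congrArg φ h1
      rw [map_mul, map_mul, hred, hred] at h2
      exact mul_right_cancel₀ hd0 (by rw [← h2, one_mul])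
    have hpow : ∀ n : ℕ, (uR : ℂ) ^ (p * n) = 1 → φ uR ^ n = 1 := by
      intro n hn
      refine eq_one_of_pow_prime_eq_one hp ?_
      rw [← pow_mul, mul_comm, ← map_pow, show uR ^ (p * n) = 1 from Subtype.ext hn, map_one]
    rw [hsum]
    exact add_mem_of_pow_eq_one hprod (hquad.imp (hpow 4) (hpow 6))

theorem stmt_11 (G : Type) [Group G] [Fintype G]
    (χ : G → ℂ) (hχ : IsGenChar G χ)
    (d : ℤ) (hd : (d : ℂ) = χ 1)
    (hval : ∀ x : G, x ≠ 1 → IsSumAtMostTwoRootsOfUnity (χ x)) :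
    ∀ p : ℕ, p.Prime → p ∣ Fintype.card G →
      ∃ a : ℤ, a ∈ ({-2, -1, 0, 1, 2} : Set ℤ) ∧ (p : ℤ) ∣ d - a := by
  intro p hp hdvd
  rcases hp.two_le.eq_or_lt with rfl | hp3
  · -- for `p = 2` the residues `0` and `1` suffice
    rcases Int.even_or_odd' d with ⟨c, rfl | rfl⟩
    · exact ⟨0, by simp, by simp⟩
    · exact ⟨1, by simp, by simp⟩
  have : Fact p.Prime := ⟨hp⟩
  obtain ⟨x, hx⟩ := exists_prime_orderOf_dvd_card p hdvd
  have hx1 : x ≠ 1 := by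
    rintro rfl
    rw [orderOf_one] at hx
    omega
  have hxp : x ^ p = 1 := hx ▸ pow_orderOf_eq_one x
  have hζ := Complex.isPrimitiveRoot_exp p hp.ne_zero
  obtain ⟨V, W, hVW⟩ := hχ
  obtain ⟨f, hf, hf1⟩ := character_eq_intPoly hp.pos hζ V hxp
  obtain ⟨g, hg, hg1⟩ := character_eq_intPoly hp.pos hζ W hxp
  have hd' : d = (f - g).eval 1 := by
    have : (d : ℂ) = (((f - g).eval 1 : ℤ) : ℂ) := by
      rw [hd, hVW, hf1, hg1, eval_sub, Int.cast_sub]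
    exact_mod_cast this
  have h := hval x hx1
  rw [hVW, hf, hg, ← map_sub] at h
  rw [hd']
  exact exists_congr_of_sum hp hp3 hζ (f - g) h
end
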